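/- arXiv:2403.19694 — 7 statements merged into one kernel-verified Lean document; each statement's English description precedes it below -/
import Mathlib

section
/- Let X, Y, Z, W be rational numbers satisfying X^4 + Y^4 = Z^4 + W^4, and let p, q, r, s be rational numbers satisfying the three equations X^4*p + Y^4*q - Z^4*r - W^4*s = 0, X^4*p^2 + Y^4*q^2 - Z^4*r^2 - W^4*s^2 = 0, and p + q + r + s = 0. Then X^4*p^4 + Y^4*q^4 - Z^4*r^4 - W^4*s^4 = 0; consequently (pX, qY, rZ, sW) is again a solution of the equation x^4 + y^4 = z^4 + w^4. -/
/-- Newton's identity for weighted power sums: each of `p, q, r, s` is a root of the monic quartic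
`(t - p) * (t - q) * (t - r) * (t - s)`, whose cubic term vanishes when `p + q + r + s = 0`. -/
theorem weighted_fourth_power_sum_eq_zero {R : Type*} [CommRing R] {a b c d p q r s : R}
    (h0 : a + b + c + d = 0)
    (h1 : a * p + b * q + c * r + d * s = 0)
    (h2 : a * p ^ 2 + b * q ^ 2 + c * r ^ 2 + d * s ^ 2 = 0)
    (h3 : p + q + r + s = 0) :
    a * p ^ 4 + b * q ^ 4 + c * r ^ 4 + d * s ^ 4 = 0 := by
  linear_combination (a * p ^ 3 + b * q ^ 3 + c * r ^ 3 + d * s ^ 3) * h3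
    - (p * q + p * r + p * s + q * r + q * s + r * s) * h2
    + (p * q * r + p * q * s + p * r * s + q * r * s) * h1
    - p * q * r * s * h0

theorem richmond_fourth_power (X Y Z W p q r s : ℚ)
    (hXYZW : X^4 + Y^4 = Z^4 + W^4)
    (h1 : X^4*p + Y^4*q - Z^4*r - W^4*s = 0)
    (h2 : X^4*p^2 + Y^4*q^2 - Z^4*r^2 - W^4*s^2 = 0)
    (h3 : p + q + r + s = 0) :
    X^4*p^4 + Y^4*q^4 - Z^4*r^4 - W^4*s^4 = 0 ∧
    (p*X)^4 + (q*Y)^4 = (r*Z)^4 + (s*W)^4 := by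
  have h4 := weighted_fourth_power_sum_eq_zero
    (a := X ^ 4) (b := Y ^ 4) (c := -Z ^ 4) (d := -W ^ 4)
    (by linear_combination hXYZW) (by linear_combination h1) (by linear_combination h2) h3
  constructor <;> linear_combination h4
end

section
/- Let X, Y, Z, W, p, q be rational numbers with X^4 + Y^4 - Z^4 - W^4 = 0 and W^4 - Z^4 ≠ 0, and let r = -((X^4 + W^4)*p + (W^4 + Y^4)*q)/(W^4 - Z^4) and s = ((X^4 + Z^4)*p + (Y^4 + Z^4)*q)/(W^4 - Z^4). Then the equation X^4*p^2 + Y^4*q^2 - Z^4*r^2 - W^4*s^2 = 0 holds if and only if A*p^2 + B*p*q + C*q^2 = 0, where A = (W^4 + Z^4)*X^8 - (W^8 - 6*W^4*Z^4 + Z^8)*X^4 + W^4*Z^4*(W^4 + Z^4), B = (2*W^4*Y^4 + 4*W^4*Z^4 + 2*Y^4*Z^4)*X^4 + 2*W^4*Z^4*(W^4 + 2*Y^4 + Z^4), and C = (W^4 + Z^4)*Y^8 - (W^8 - 6*W^4*Z^4 + Z^8)*Y^4 + W^4*Z^4*(W^4 + Z^4). -/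
theorem inflectional_condition_quadratic (X Y Z W p q : ℚ)
    (hXYZW : X^4 + Y^4 - Z^4 - W^4 = 0) (h : W^4 - Z^4 ≠ 0)
    (r s : ℚ)
    (hr : r = -((X^4 + W^4)*p + (W^4 + Y^4)*q)/(W^4 - Z^4))
    (hs : s = ((X^4 + Z^4)*p + (Y^4 + Z^4)*q)/(W^4 - Z^4))
    (A B C : ℚ)
    (hA : A = (W^4 + Z^4)*X^8 - (W^8 - 6*W^4*Z^4 + Z^8)*X^4 + W^4*Z^4*(W^4 + Z^4))
    (hB : B = (2*W^4*Y^4 + 4*W^4*Z^4 + 2*Y^4*Z^4)*X^4 + 2*W^4*Z^4*(W^4 + 2*Y^4 + Z^4))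
    (hC : C = (W^4 + Z^4)*Y^8 - (W^8 - 6*W^4*Z^4 + Z^8)*Y^4 + W^4*Z^4*(W^4 + Z^4)) :
    X^4*p^2 + Y^4*q^2 - Z^4*r^2 - W^4*s^2 = 0 ↔ A*p^2 + B*p*q + C*q^2 = 0 := by
  have key : A*p^2 + B*p*q + C*q^2
      = -(W^4 - Z^4)^2 * (X^4*p^2 + Y^4*q^2 - Z^4*r^2 - W^4*s^2) := by
    subst hr hs hA hB hC
    field_simp
    ring
  rw [key, mul_eq_zero, or_iff_right (neg_ne_zero.mpr (pow_ne_zero 2 h))]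
end

section
/- Let X, Y, Z, W be rational numbers satisfying X^4 + Y^4 - Z^4 - W^4 = 0, and set A = (W^4 + Z^4)*X^8 - (W^8 - 6*W^4*Z^4 + Z^8)*X^4 + W^4*Z^4*(W^4 + Z^4), B = (2*W^4*Y^4 + 4*W^4*Z^4 + 2*Y^4*Z^4)*X^4 + 2*W^4*Z^4*(W^4 + 2*Y^4 + Z^4), and C = (W^4 + Z^4)*Y^8 - (W^8 - 6*W^4*Z^4 + Z^8)*Y^4 + W^4*Z^4*(W^4 + Z^4). Then the discriminant of the quadratic form A*p^2 + B*p*q + C*q^2 with respect to p satisfies B^2 - 4*A*C = 64*X^4*Y^4*Z^4*W^4*(W^4 - Z^4)^2, so that in particular the discriminant is a perfect square of a rational number. -/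
theorem discriminant_is_square (X Y Z W : ℚ)
    (hXYZW : X^4 + Y^4 - Z^4 - W^4 = 0)
    (A B C : ℚ)
    (hA : A = (W^4 + Z^4)*X^8 - (W^8 - 6*W^4*Z^4 + Z^8)*X^4 + W^4*Z^4*(W^4 + Z^4))
    (hB : B = (2*W^4*Y^4 + 4*W^4*Z^4 + 2*Y^4*Z^4)*X^4 + 2*W^4*Z^4*(W^4 + 2*Y^4 + Z^4))
    (hC : C = (W^4 + Z^4)*Y^8 - (W^8 - 6*W^4*Z^4 + Z^8)*Y^4 + W^4*Z^4*(W^4 + Z^4)) :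
    B^2 - 4*A*C = 64*X^4*Y^4*Z^4*W^4*(W^4 - Z^4)^2 ∧
    ∃ d : ℚ, B^2 - 4*A*C = d^2 := by
  have hY : Y^4 = Z^4 + W^4 - X^4 := by linear_combination hXYZW
  have hY8 : Y^8 = (Z^4 + W^4 - X^4)^2 := by rw [← hY]; ring
  have hdisc : B^2 - 4*A*C = 64*X^4*Y^4*Z^4*W^4*(W^4 - Z^4)^2 := by
    rw [hA, hB, hC, hY8, hY]
    ring
  refine ⟨hdisc, 8*X^2*Y^2*Z^2*W^2*(W^4 - Z^4), ?_⟩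
  rw [hdisc]
  ring
end

section
/- Let X, Y, Z, W, q be rational numbers with X^4 + Y^4 - Z^4 - W^4 = 0. Set A = (W^4 + Z^4)*X^8 - (W^8 - 6*W^4*Z^4 + Z^8)*X^4 + W^4*Z^4*(W^4 + Z^4), B = (2*W^4*Y^4 + 4*W^4*Z^4 + 2*Y^4*Z^4)*X^4 + 2*W^4*Z^4*(W^4 + 2*Y^4 + Z^4), and C = (W^4 + Z^4)*Y^8 - (W^8 - 6*W^4*Z^4 + Z^8)*Y^4 + W^4*Z^4*(W^4 + Z^4), and assume A ≠ 0. Then for each choice of sign ε ∈ {1, -1}, the rational number p = -q*((W^4*Y^4 + 2*W^4*Z^4 + Y^4*Z^4)*X^4 + ε*4*Y^2*Z^2*W^2*(W^4 - Z^4)*X^2 + Z^4*W^4*(W^4 + 2*Y^4 + Z^4))/A satisfies A*p^2 + B*p*q + C*q^2 = 0. -/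
/-- A quarter of the discriminant of Richmond's quadratic, in terms of the fourth powers
`x, y, z, w` of the coordinates of the given point. -/
theorem richmond_quarter_discrim {R : Type*} [CommRing R] {x y z w : R} (h : x + y - z - w = 0) :
    ((w*y + 2*w*z + y*z)*x + z*w*(w + 2*y + z))^2
      - ((w + z)*x^2 - (w^2 - 6*w*z + z^2)*x + w*z*(w + z))
        * ((w + z)*y^2 - (w^2 - 6*w*z + z^2)*y + w*z*(w + z))
      = 16*x*y*z*w*(w - z)^2 := by
  obtain rfl : y = z + w - x := by linear_combination h
  ring

/-- If `H ^ 2 - A * C = S ^ 2`, then `-q * (H + S) / A` is a root of the quadratic form with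
coefficients `A, 2 * H, C`. -/
theorem quadratic_form_eq_zero_of_sq {K : Type*} [Field K] {A H C S p q : K} (hA : A ≠ 0)
    (hS : H^2 - A*C = S^2) (hp : p = -q*(H + S)/A) :
    A*p^2 + 2*H*p*q + C*q^2 = 0 := by
  have hAp : A*p = -q*(H + S) := by rw [hp]; field_simp
  refine (mul_eq_zero.mp ?_).resolve_left hA
  linear_combination (A*p + 2*H*q - q*(H + S)) * hAp - q^2 * hS

theorem quadratic_roots (X Y Z W q : ℚ)
    (hXYZW : X^4 + Y^4 - Z^4 - W^4 = 0)
    (A B C : ℚ)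
    (hA : A = (W^4 + Z^4)*X^8 - (W^8 - 6*W^4*Z^4 + Z^8)*X^4 + W^4*Z^4*(W^4 + Z^4))
    (hB : B = (2*W^4*Y^4 + 4*W^4*Z^4 + 2*Y^4*Z^4)*X^4 + 2*W^4*Z^4*(W^4 + 2*Y^4 + Z^4))
    (hC : C = (W^4 + Z^4)*Y^8 - (W^8 - 6*W^4*Z^4 + Z^8)*Y^4 + W^4*Z^4*(W^4 + Z^4))
    (hAne : A ≠ 0) :
    ∀ ε : ℚ, ε = 1 ∨ ε = -1 →
      ∀ p : ℚ, p = -q*((W^4*Y^4 + 2*W^4*Z^4 + Y^4*Z^4)*X^4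
          + ε*4*Y^2*Z^2*W^2*(W^4 - Z^4)*X^2 + Z^4*W^4*(W^4 + 2*Y^4 + Z^4))/A →
        A*p^2 + B*p*q + C*q^2 = 0 := by
  intro ε hε p hp
  have hε2 : ε^2 = 1 := by rcases hε with rfl | rfl <;> norm_num
  have hS : ((W^4*Y^4 + 2*W^4*Z^4 + Y^4*Z^4)*X^4 + Z^4*W^4*(W^4 + 2*Y^4 + Z^4))^2 - A*C
      = (ε*4*Y^2*Z^2*W^2*(W^4 - Z^4)*X^2)^2 := by
    rw [hA, hC]
    linear_combination richmond_quarter_discrim hXYZW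
      - 16*X^4*Y^4*Z^4*W^4*(W^4 - Z^4)^2 * hε2
  have hroot := quadratic_form_eq_zero_of_sq (p := p) (q := q) hAne hS (by rw [hp]; ring)
  rw [hB]
  linear_combination hroot
end

section
/- In the polynomial ring ℤ[X, Y, Z, W], the polynomial X^4 + Y^4 - Z^4 - W^4 divides X1^4 + Y1^4 - Z1^4 - W1^4, where X1 = X*((W^4*Y^4 + 2*W^4*Z^4 + Y^4*Z^4)*X^4 + 4*W^2*X^2*Y^2*Z^2*(W^4 - Z^4) + W^4*Z^4*(W^4 + 2*Y^4 + Z^4)), Y1 = Y*((W^4 + Z^4)*X^8 - (W^8 - 6*W^4*Z^4 + Z^8)*X^4 + W^4*Z^4*(W^4 + Z^4)), Z1 = Z*(W^4*X^8 - 4*W^2*Y^2*Z^2*X^6 - (W^8 + 2*W^4*Y^4 - 2*W^4*Z^4 - Y^4*Z^4)*X^4 - 4*W^6*Y^2*Z^2*X^2 - W^4*Y^4*Z^4), and W1 = W*(Z^4*X^8 + 4*W^2*Y^2*Z^2*X^6 + (W^4*Y^4 + 2*W^4*Z^4 - 2*Y^4*Z^4 - Z^8)*X^4 + 4*W^2*Y^2*Z^6*X^2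 - W^4*Y^4*Z^4). -/
open MvPolynomial

/-- Fourth power of `a + 4 * b * t`, split into even and odd parts in `t`, given `t ^ 2 = d`. -/
lemma add_four_mul_pow_four {R : Type*} [CommRing R] {t d : R} (ht : t ^ 2 = d) (a b : R) :
    (a + 4 * b * t) ^ 4 =
      (a ^ 4 + 96 * a ^ 2 * b ^ 2 * d + 256 * b ^ 4 * d ^ 2)
        + 16 * a * b * (a ^ 2 + 16 * b ^ 2 * d) * t := by
  subst ht
  ring

/-- Richmond's first new solution of `x ^ 4 + y ^ 4 = z ^ 4 + w ^ 4`, over a commutative ring. -/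
lemma new_solution_one_s6 {R : Type*} [CommRing R] {x y z w : R}
    (h : x ^ 4 + y ^ 4 = z ^ 4 + w ^ 4) :
    (x*((w^4*y^4 + 2*w^4*z^4 + y^4*z^4)*x^4 + 4*w^2*x^2*y^2*z^2*(w^4 - z^4)
      + w^4*z^4*(w^4 + 2*y^4 + z^4)))^4
    + (y*((w^4 + z^4)*x^8 - (w^8 - 6*w^4*z^4 + z^8)*x^4 + w^4*z^4*(w^4 + z^4)))^4
    - (z*(w^4*x^8 - 4*w^2*y^2*z^2*x^6 - (w^8 + 2*w^4*y^4 - 2*w^4*z^4 - y^4*z^4)*x^4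
      - 4*w^6*y^2*z^2*x^2 - w^4*y^4*z^4))^4
    - (w*(z^4*x^8 + 4*w^2*y^2*z^2*x^6 + (w^4*y^4 + 2*w^4*z^4 - 2*y^4*z^4 - z^8)*x^4
      + 4*w^2*y^2*z^6*x^2 - w^4*y^4*z^4))^4 = 0 := by
  obtain ⟨t, ht⟩ : ∃ t, t = x^2*y^2*z^2*w^2 := ⟨_, rfl⟩
  obtain ⟨p, hp⟩ : ∃ p, p = x^4 := ⟨_, rfl⟩
  obtain ⟨r, hr⟩ : ∃ r, r = z^4 := ⟨_, rfl⟩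
  obtain ⟨s, hs⟩ : ∃ s, s = w^4 := ⟨_, rfl⟩
  obtain ⟨c, hc⟩ : ∃ c, c = y^4 := ⟨_, rfl⟩
  have ht2 : t ^ 2 = p * c * r * s := by subst_vars; ring
  have hX := add_four_mul_pow_four ht2
    ((s*c + 2*s*r + c*r)*p + s*r*(s + 2*c + r)) (s - r)
  have hZ := add_four_mul_pow_four ht2
    (s*p^2 - (s^2 + 2*s*c - 2*s*r - c*r)*p - s*c*r) (-(p + s))
  have hW := add_four_mul_pow_four ht2
    (r*p^2 + (s*c + 2*s*r - 2*c*r - r^2)*p - s*c*r) (p + r)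
  have hcp : c = r + s - p := by subst_vars; linear_combination h
  trans p * (((s*c + 2*s*r + c*r)*p + s*r*(s + 2*c + r)) + 4 * (s - r) * t) ^ 4
    + c * ((s + r)*p^2 - (s^2 - 6*s*r + r^2)*p + s*r*(s + r)) ^ 4
    - r * ((s*p^2 - (s^2 + 2*s*c - 2*s*r - c*r)*p - s*c*r) + 4 * (-(p + s)) * t) ^ 4
    - s * ((r*p^2 + (s*c + 2*s*r - 2*c*r - r^2)*p - s*c*r) + 4 * (p + r) * t) ^ 4
  · rw [hp, hc, hr, hs, ht]
    simp only [mul_pow]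
    congr 1
    · congr 1
      · congr 1
        · congr 2
          ring
        · congr 2
          ring
      · congr 2
        ring
    · congr 2
      ring
  · rw [hX, hZ, hW, hcp]
    ring

theorem dvd_new_solution_one :
    letI X : MvPolynomial (Fin 4) ℤ := MvPolynomial.X 0
    letI Y : MvPolynomial (Fin 4) ℤ := MvPolynomial.X 1
    letI Z : MvPolynomial (Fin 4) ℤ := MvPolynomial.X 2
    letI W : MvPolynomial (Fin 4) ℤ := MvPolynomial.X 3
    letI X1 := X*((W^4*Y^4 + 2*W^4*Z^4 + Y^4*Z^4)*X^4 + 4*W^2*X^2*Y^2*Z^2*(W^4 - Z^4)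
      + W^4*Z^4*(W^4 + 2*Y^4 + Z^4))
    letI Y1 := Y*((W^4 + Z^4)*X^8 - (W^8 - 6*W^4*Z^4 + Z^8)*X^4 + W^4*Z^4*(W^4 + Z^4))
    letI Z1 := Z*(W^4*X^8 - 4*W^2*Y^2*Z^2*X^6 - (W^8 + 2*W^4*Y^4 - 2*W^4*Z^4 - Y^4*Z^4)*X^4
      - 4*W^6*Y^2*Z^2*X^2 - W^4*Y^4*Z^4)
    letI W1 := W*(Z^4*X^8 + 4*W^2*Y^2*Z^2*X^6 + (W^4*Y^4 + 2*W^4*Z^4 - 2*Y^4*Z^4 - Z^8)*X^4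
      + 4*W^2*Y^2*Z^6*X^2 - W^4*Y^4*Z^4)
    (X^4 + Y^4 - Z^4 - W^4) ∣ (X1^4 + Y1^4 - Z1^4 - W1^4) := by
  rw [← Ideal.mem_span_singleton, ← Ideal.Quotient.eq_zero_iff_mem]
  set f := Ideal.Quotient.mk
    (Ideal.span {(X 0 ^ 4 + X 1 ^ 4 - X 2 ^ 4 - X 3 ^ 4 : MvPolynomial (Fin 4) ℤ)})
  have h : f (X 0) ^ 4 + f (X 1) ^ 4 = f (X 2) ^ 4 + f (X 3) ^ 4 := by
    have h0 : f (X 0 ^ 4 + X 1 ^ 4 - X 2 ^ 4 - X 3 ^ 4) = 0 :=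
      Ideal.Quotient.eq_zero_iff_mem.2 (Ideal.mem_span_singleton_self _)
    simp only [map_sub, map_add, map_pow] at h0
    linear_combination h0
  simpa only [map_sub, map_add, map_mul, map_pow, map_ofNat]
    using new_solution_one_s6 h
end

section
/- In the polynomial ring ℤ[X, Y, Z, W], the polynomial X^4 + Y^4 - Z^4 - W^4 divides X2^4 + Y2^4 - Z2^4 - W2^4, where X2 = X*((W^4*Y^4 + 2*W^4*Z^4 + Y^4*Z^4)*X^4 - 4*W^2*X^2*Y^2*Z^2*(W^4 - Z^4) + W^4*Z^4*(W^4 + 2*Y^4 + Z^4)), Y2 = Y*((W^4 + Z^4)*X^8 - (W^8 - 6*W^4*Z^4 + Z^8)*X^4 + W^4*Z^4*(W^4 + Z^4)), Z2 = Z*(W^4*X^8 + 4*W^2*Y^2*Z^2*X^6 - (W^8 + 2*W^4*Y^4 - 2*W^4*Z^4 - Y^4*Z^4)*X^4 + 4*W^6*Y^2*Z^2*X^2 - W^4*Y^4*Z^4), and W2 = W*(X^8*Z^4 - 4*W^2*Y^2*Z^2*X^6 + (W^4*Y^4 + 2*W^4*Z^4 - 2*Y^4*Z^4 - Z^8)*X^4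 - 4*W^2*Y^2*Z^6*X^2 - W^4*Y^4*Z^4). -/
open MvPolynomial

/-- The fourth power of `a + b * y`, expanded in terms of `y` and a given value `r` of `y ^ 2`. -/
lemma add_mul_pow_four_of_sq_eq {R : Type*} [CommRing R] {y r : R} (h : y ^ 2 = r) (a b : R) :
    (a + b * y) ^ 4 = ((a ^ 2 + b ^ 2 * r) ^ 2 + (2 * a * b) ^ 2 * r)
      + 2 * (a ^ 2 + b ^ 2 * r) * (2 * a * b) * y := by
  subst h
  ring

set_option maxHeartbeats 1000000 in
/-- The second new solution, with `x, y, z, w` standing for the squares of the original variables: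
after eliminating `y ^ 2`, the coefficients of `1` and of `y` both vanish identically. -/
lemma new_solution_two_of_squares {R : Type*} [CommRing R] {x y z w : R}
    (h : y ^ 2 = z ^ 2 + w ^ 2 - x ^ 2) :
    x ^ 2 * ((w^2*y^2 + 2*w^2*z^2 + y^2*z^2)*x^2 - 4*w*x*y*z*(w^2 - z^2)
        + w^2*z^2*(w^2 + 2*y^2 + z^2)) ^ 4
      + y ^ 2 * ((w^2 + z^2)*x^4 - (w^4 - 6*w^2*z^2 + z^4)*x^2 + w^2*z^2*(w^2 + z^2)) ^ 4
      - z ^ 2 * (w^2*x^4 + 4*w*y*z*x^3 - (w^4 + 2*w^2*y^2 - 2*w^2*z^2 - y^2*z^2)*x^2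
        + 4*w^3*y*z*x - w^2*y^2*z^2) ^ 4
      - w ^ 2 * (x^4*z^2 - 4*w*y*z*x^3 + (w^2*y^2 + 2*w^2*z^2 - 2*y^2*z^2 - z^4)*x^2
        - 4*w*y*z^3*x - w^2*y^2*z^2) ^ 4 = 0 := by
  rw [h]
  have hX := add_mul_pow_four_of_sq_eq h
    ((w^2*(z^2 + w^2 - x^2) + 2*w^2*z^2 + (z^2 + w^2 - x^2)*z^2)*x^2
      + w^2*z^2*(w^2 + 2*(z^2 + w^2 - x^2) + z^2)) (-4*w*x*z*(w^2 - z^2))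
  have hZ := add_mul_pow_four_of_sq_eq h
    (w^2*x^4 - (w^4 + 2*w^2*(z^2 + w^2 - x^2) - 2*w^2*z^2 - (z^2 + w^2 - x^2)*z^2)*x^2
      - w^2*(z^2 + w^2 - x^2)*z^2) (4*w*z*x^3 + 4*w^3*z*x)
  have hW := add_mul_pow_four_of_sq_eq h
    (x^4*z^2 + (w^2*(z^2 + w^2 - x^2) + 2*w^2*z^2 - 2*(z^2 + w^2 - x^2)*z^2 - z^4)*x^2
      - w^2*(z^2 + w^2 - x^2)*z^2) (-4*w*z*x^3 - 4*w*z^3*x)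
  linear_combination x ^ 2 * hX - z ^ 2 * hZ - w ^ 2 * hW

theorem dvd_new_solution_two :
    letI X : MvPolynomial (Fin 4) ℤ := MvPolynomial.X 0
    letI Y : MvPolynomial (Fin 4) ℤ := MvPolynomial.X 1
    letI Z : MvPolynomial (Fin 4) ℤ := MvPolynomial.X 2
    letI W : MvPolynomial (Fin 4) ℤ := MvPolynomial.X 3
    letI X2 := X*((W^4*Y^4 + 2*W^4*Z^4 + Y^4*Z^4)*X^4 - 4*W^2*X^2*Y^2*Z^2*(W^4 - Z^4)
      + W^4*Z^4*(W^4 + 2*Y^4 + Z^4))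
    letI Y2 := Y*((W^4 + Z^4)*X^8 - (W^8 - 6*W^4*Z^4 + Z^8)*X^4 + W^4*Z^4*(W^4 + Z^4))
    letI Z2 := Z*(W^4*X^8 + 4*W^2*Y^2*Z^2*X^6 - (W^8 + 2*W^4*Y^4 - 2*W^4*Z^4 - Y^4*Z^4)*X^4
      + 4*W^6*Y^2*Z^2*X^2 - W^4*Y^4*Z^4)
    letI W2 := W*(X^8*Z^4 - 4*W^2*Y^2*Z^2*X^6 + (W^4*Y^4 + 2*W^4*Z^4 - 2*Y^4*Z^4 - Z^8)*X^4
      - 4*W^2*Y^2*Z^6*X^2 - W^4*Y^4*Z^4)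
    (X^4 + Y^4 - Z^4 - W^4) ∣ (X2^4 + Y2^4 - Z2^4 - W2^4) := by
  rw [← Ideal.Quotient.eq_zero_iff_dvd]
  set φ := Ideal.Quotient.mk
    (Ideal.span {(X 0 ^ 4 + X 1 ^ 4 - X 2 ^ 4 - X 3 ^ 4 : MvPolynomial (Fin 4) ℤ)})
  have hφ : φ (X 0 ^ 4 + X 1 ^ 4 - X 2 ^ 4 - X 3 ^ 4) = 0 :=
    (Ideal.Quotient.eq_zero_iff_dvd _ _).mpr dvd_rfl
  simp only [map_add, map_sub, map_pow] at hφ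
  have h : (φ (X 1) ^ 2) ^ 2 = (φ (X 2) ^ 2) ^ 2 + (φ (X 3) ^ 2) ^ 2 - (φ (X 0) ^ 2) ^ 2 := by
    linear_combination hφ
  simpa only [map_add, map_sub, map_pow, map_mul, map_ofNat, mul_pow, ← pow_mul, Nat.reduceMul]
    using new_solution_two_of_squares h
end

section
/- Let X, Y, Z, W be integers (or rational numbers) satisfying X^4 + Y^4 = Z^4 + W^4. Define X1 = X*((W^4*Y^4 + 2*W^4*Z^4 + Y^4*Z^4)*X^4 + 4*W^2*X^2*Y^2*Z^2*(W^4 - Z^4) + W^4*Z^4*(W^4 + 2*Y^4 + Z^4)), Y1 = Y*((W^4 + Z^4)*X^8 - (W^8 - 6*W^4*Z^4 + Z^8)*X^4 + W^4*Z^4*(W^4 + Z^4)), Z1 = Z*(W^4*X^8 - 4*W^2*Y^2*Z^2*X^6 - (W^8 + 2*W^4*Y^4 - 2*W^4*Z^4 - Y^4*Z^4)*X^4 - 4*W^6*Y^2*Z^2*X^2 - W^4*Y^4*Z^4), and W1 = W*(Z^4*X^8 + 4*W^2*Y^2*Z^2*X^6 + (W^4*Y^4 + 2*W^4*Z^4 -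 2*Y^4*Z^4 - Z^8)*X^4 + 4*W^2*Y^2*Z^6*X^2 - W^4*Y^4*Z^4). Then X1^4 + Y1^4 = Z1^4 + W1^4. -/
/-- Fourth power of `p + s * q` reduced modulo `s ^ 2 = m`. -/
theorem add_mul_pow_four_of_sq_eq_s8 {R : Type*} [CommRing R] {s m : R} (hs : s ^ 2 = m) (p q : R) :
    (p + s * q) ^ 4 =
      p ^ 4 + 6 * p ^ 2 * q ^ 2 * m + q ^ 4 * m ^ 2 + 4 * s * (p ^ 3 * q + p * q ^ 3 * m) := by
  subst hs
  ring

/-- Richmond's identity in terms of the fourth powers `a, b, c, d` of the coordinates and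
the square `s` of their product. -/
theorem richmond_identity {R : Type*} [CommRing R] {a b c d s : R}
    (h : a + b = c + d) (hs : s ^ 2 = a * b * c * d) :
    a * ((d * b + 2 * d * c + b * c) * a + d * c * (d + 2 * b + c) + s * (4 * (d - c))) ^ 4
      + b * ((d + c) * a ^ 2 - (d ^ 2 - 6 * d * c + c ^ 2) * a + d * c * (d + c)) ^ 4 =
    c * (d * a ^ 2 - (d ^ 2 + 2 * d * b - 2 * d * c - b * c) * a - d * b * c
        + s * (-4 * (a + d))) ^ 4
      + d * (c * a ^ 2 + (d * b + 2 * d * c - 2 * b * c - c ^ 2) * a - d * b * c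
        + s * (4 * (a + c))) ^ 4 := by
  simp only [add_mul_pow_four_of_sq_eq_s8 hs]
  obtain rfl : b = c + d - a := by linear_combination h
  ring

theorem new_solution_one (X Y Z W : ℤ)
    (h : X^4 + Y^4 = Z^4 + W^4)
    (X1 Y1 Z1 W1 : ℤ)
    (hX1 : X1 = X*((W^4*Y^4 + 2*W^4*Z^4 + Y^4*Z^4)*X^4 + 4*W^2*X^2*Y^2*Z^2*(W^4 - Z^4)
      + W^4*Z^4*(W^4 + 2*Y^4 + Z^4)))
    (hY1 : Y1 = Y*((W^4 + Z^4)*X^8 - (W^8 - 6*W^4*Z^4 + Z^8)*X^4 + W^4*Z^4*(W^4 + Z^4)))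
    (hZ1 : Z1 = Z*(W^4*X^8 - 4*W^2*Y^2*Z^2*X^6 - (W^8 + 2*W^4*Y^4 - 2*W^4*Z^4 - Y^4*Z^4)*X^4
      - 4*W^6*Y^2*Z^2*X^2 - W^4*Y^4*Z^4))
    (hW1 : W1 = W*(Z^4*X^8 + 4*W^2*Y^2*Z^2*X^6 + (W^4*Y^4 + 2*W^4*Z^4 - 2*Y^4*Z^4 - Z^8)*X^4
      + 4*W^2*Y^2*Z^6*X^2 - W^4*Y^4*Z^4)) :
    X1^4 + Y1^4 = Z1^4 + W1^4 := by
  have hs : (X ^ 2 * Y ^ 2 * Z ^ 2 * W ^ 2) ^ 2 = X ^ 4 * Y ^ 4 * Z ^ 4 * W ^ 4 := by ring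
  subst hX1 hY1 hZ1 hW1
  linear_combination richmond_identity h hs
end
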